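/- arXiv:0709.4352 — 6 statements merged into one kernel-verified Lean document; each statement's English description precedes it below -/
import Mathlib

section
/- Let n ≥ 2 and let A be a real symmetric n×n matrix. If H_2 > 0, then H_1² ≥ H_2 > 0 (in particular H_1 ≠ 0); and if moreover H_1 > 0, then the first Newton transformation P_1 = n·H_1·I + A is positive definite, i.e. all of its eigenvalues μ_{i,1} = n·H_1 + κ_i are positive. -/
/-- The `k`-th elementary symmetric function of `κ₁, …, κₙ`:
`S_k = σ_k(κ₁,…,κₙ) = ∑_{i₁<⋯<i_k} κ_{i₁}⋯κ_{i_k}` (with `S_0 = 1`). -/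
noncomputable def Ssym (n : ℕ) (κ : Fin n → ℝ) (k : ℕ) : ℝ :=
  ∑ t ∈ (Finset.univ : Finset (Fin n)).powersetCard k, ∏ i ∈ t, κ i

/-- The `k`-th mean curvature `H_k`, defined by `binom(n,k)·H_k = (−1)^k·S_k`
(so `H_k = 0` for `k > n`, since then `S_k = 0`). -/
noncomputable def Hmc (n : ℕ) (κ : Fin n → ℝ) (k : ℕ) : ℝ :=
  (-1 : ℝ) ^ k * Ssym n κ k / (n.choose k : ℝ)

theorem aux_e2 {ι : Type*} [DecidableEq ι] (s : Finset ι) (f : ι → ℝ) :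
    (∑ i ∈ s, f i) ^ 2 = ∑ i ∈ s, f i ^ 2 + 2 * ∑ t ∈ s.powersetCard 2, ∏ i ∈ t, f i := by
  induction s using Finset.induction_on with
  | empty => simp [Finset.powersetCard_eq_empty.2 (show (∅ : Finset ι).card < 2 by simp)]
  | insert a s ha ih =>
    have key : ∑ t ∈ (insert a s).powersetCard 2, ∏ i ∈ t, f i =
        ∑ t ∈ s.powersetCard 2, ∏ i ∈ t, f i + f a * ∑ i ∈ s, f i := by
      rw [Finset.powersetCard_succ_insert ha, Finset.sum_union, Finset.sum_image]
      · congr 1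
        rw [Finset.powersetCard_one, Finset.sum_map, Finset.mul_sum]
        refine Finset.sum_congr rfl fun i hi => ?_
        have : a ≠ i := fun h => ha (h ▸ hi)
        simp [Finset.prod_pair this]
      · intro t ht u hu h
        have h1 : a ∉ t := fun h => ha ((Finset.mem_powersetCard.1 ht).1 h)
        have h2 : a ∉ u := fun h => ha ((Finset.mem_powersetCard.1 hu).1 h)
        rw [← Finset.erase_insert h1, ← Finset.erase_insert h2]
        exact congrArg (fun v => v.erase a) h
      · rw [Finset.disjoint_left]
        intro t ht hu
        obtain ⟨u, _, rfl⟩ := Finset.mem_image.1 hu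
        exact ha ((Finset.mem_powersetCard.1 ht).1 (Finset.mem_insert_self a u))
    rw [key, Finset.sum_insert ha, Finset.sum_insert ha]
    linarith [ih]

/-- Let `n ≥ 2` and let `A` be a real symmetric `n×n` matrix with eigenvalues `κ₁,…,κₙ`
listed with multiplicity. If `H_2 > 0`, then `H_1² ≥ H_2 > 0` (in particular `H_1 ≠ 0`),
and if moreover `H_1 > 0`, then the first Newton transformation `P_1 = n·H_1·I + A`
is positive definite, i.e. all of its eigenvalues `μ_{i,1} = n·H_1 + κ_i` are positive. -/
theorem stmt0 {n : ℕ} (hn : 2 ≤ n) (A : Matrix (Fin n) (Fin n) ℝ) (hA : A.IsSymm)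
    (κ : Fin n → ℝ)
    (hchar : A.charpoly = ∏ i, (Polynomial.X - Polynomial.C (κ i)))
    (h2 : 0 < Hmc n κ 2) :
    Hmc n κ 2 ≤ (Hmc n κ 1) ^ 2 ∧ Hmc n κ 1 ≠ 0 ∧
      (0 < Hmc n κ 1 →
        (∀ i : Fin n, 0 < (n : ℝ) * Hmc n κ 1 + κ i) ∧
        Matrix.PosDef
          (((n : ℝ) * Hmc n κ 1) • (1 : Matrix (Fin n) (Fin n) ℝ) + A)) := by
  classical
  have hnR : (2 : ℝ) ≤ n := by exact_mod_cast hn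
  have e2 := aux_e2 Finset.univ κ
  have cs := sq_sum_le_card_mul_sum_sq (s := Finset.univ) (f := κ)
  have hle : ∀ i, κ i ^ 2 ≤ ∑ i, κ i ^ 2 := fun i =>
    Finset.single_le_sum (f := fun i => κ i ^ 2) (fun j _ => sq_nonneg _) (Finset.mem_univ i)
  have hQ : 0 ≤ ∑ i, κ i ^ 2 := Finset.sum_nonneg fun j _ => sq_nonneg _
  have H1 : Hmc n κ 1 = -(∑ i, κ i) / n := by
    simp [Hmc, Ssym, Finset.powersetCard_one]
  have H2 : Hmc n κ 2 = ((∑ i, κ i) ^ 2 - ∑ i, κ i ^ 2) / (n * (n - 1)) := by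
    rw [e2, Hmc, Ssym, Nat.cast_choose_two]
    have : (n : ℝ) - 1 ≠ 0 := by linarith
    field_simp
    ring
  have hH1 : (n : ℝ) * Hmc n κ 1 = -(∑ i, κ i) := by rw [H1]; field_simp
  rw [H2] at h2
  rw [hH1, H1, H2]
  clear e2 H1 H2 hH1
  simp only [Finset.card_univ, Fintype.card_fin] at cs
  generalize (∑ i, κ i) = S at *
  generalize (∑ i, κ i ^ 2) = Q at *
  have hpos : (0 : ℝ) < n * (n - 1) := by nlinarith
  have hSQ : Q < S ^ 2 := by
    have := (div_pos_iff_of_pos_right hpos).1 h2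
    linarith
  refine ⟨?_, ?_, ?_⟩
  · rw [div_pow, div_le_div_iff₀ hpos (by positivity)]
    nlinarith [mul_nonneg (by linarith : (0 : ℝ) ≤ n) (sub_nonneg.2 cs)]
  · have hS : S ≠ 0 := by rintro rfl; nlinarith
    have : (n : ℝ) ≠ 0 := by linarith
    exact div_ne_zero (neg_ne_zero.2 hS) this
  · intro h
    have hS : 0 < -S := (div_pos_iff_of_pos_right (by linarith)).1 h
    have hk : ∀ i, 0 < -S + κ i := by
      intro i
      have := abs_lt_of_sq_lt_sq (a := κ i) (b := -S) (by nlinarith [hle i]) hS.le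
      linarith [(abs_lt.1 this).1]
    refine ⟨hk, ?_⟩
    have hP : ((-S) • (1 : Matrix (Fin n) (Fin n) ℝ) + A).IsHermitian := by
      rw [Matrix.IsHermitian, Matrix.conjTranspose_eq_transpose_of_trivial]
      simp [hA.eq]
    rw [hP.posDef_iff_eigenvalues_pos]
    intro j
    have hj := hP.eigenvalues_mem_spectrum_real j
    generalize hP.eigenvalues j = l at hj
    have hl : l - (-S) ∈ spectrum ℝ A := by
      rw [← Algebra.algebraMap_eq_smul_one] at hj
      rw [← spectrum.add_mem_add_iff (s := -S)]
      simpa using hj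
    rw [Matrix.mem_spectrum_iff_isRoot_charpoly, hchar, Polynomial.IsRoot,
      Polynomial.eval_prod, Finset.prod_eq_zero_iff] at hl
    obtain ⟨i, _, hi⟩ := hl
    simp at hi
    linarith [hk i]
end

section
/- Let Σ be a connected topological space, let n ≥ 3 and 2 ≤ k ≤ n−1, and let y : Σ → ℝⁿ be a continuous map such that σ_{k+1}(y(p)) > 0 for every p ∈ Σ and such that there exists a point p₀ ∈ Σ with all coordinates y_i(p₀) > 0 (i = 1,…,n). Then for every p ∈ Σ, every 1 ≤ j ≤ k, and every 1 ≤ i ≤ n, the j-th elementary symmetric polynomial of the (n−1)-tuple (y_l(p))_{l ≠ i} is positive; in particular σ_j(y(p)) > 0 for all 1 ≤ j ≤ k and all p ∈ Σ. -/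
/-- The `j`-th elementary symmetric polynomial of the values `y i` for `i` in the
finite index set `s`: `σ_j((y_i)_{i ∈ s}) = ∑_{i₁<⋯<i_j ∈ s} y_{i₁}⋯y_{i_j}`. -/
noncomputable def esymmOn {n : ℕ} (s : Finset (Fin n)) (j : ℕ) (y : Fin n → ℝ) : ℝ :=
  ∑ t ∈ s.powersetCard j, ∏ i ∈ t, y i

open Polynomial in
lemma aux_coeff_pos (Q : ℝ[X]) (hs : Q.Splits) (h : ∀ i, 0 ≤ Q.coeff i) (h0 : 0 < Q.coeff 0)
    (i : ℕ) (hi : i ≤ Q.natDegree) : 0 < Q.coeff i := by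
  have hQ : Q ≠ 0 := by rintro rfl; simp at h0
  have hroot : ∀ r ∈ Q.roots, r < 0 := by
    intro r hr
    by_contra! hr0
    have h1 : Q.eval r = 0 := (mem_roots hQ).1 hr
    rw [eval_eq_sum_range, Finset.sum_range_succ'] at h1
    have h2 : 0 ≤ ∑ k ∈ Finset.range Q.natDegree, Q.coeff (k + 1) * r ^ (k + 1) :=
      Finset.sum_nonneg fun k _ => mul_nonneg (h _) (pow_nonneg hr0 _)
    simp at h1
    linarith
  have hcard := splits_iff_card_roots.1 hs
  rw [Polynomial.coeff_eq_esymm_roots_of_splits hs hi, mul_assoc, ← Multiset.esymm_neg]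
  have hl : 0 < Q.leadingCoeff := lt_of_le_of_ne (h _) (Ne.symm (leadingCoeff_ne_zero.2 hQ))
  refine mul_pos hl ?_
  have hprod : ∀ s : Multiset ℝ, s ≤ Q.roots.map Neg.neg → 0 < s.prod := by
    intro s hsle
    refine Multiset.prod_pos ?_
    intro a ha
    obtain ⟨r, hr, rfl⟩ := Multiset.mem_map.1 (Multiset.mem_of_le hsle ha)
    have := hroot r hr
    linarith
  set T := Q.roots.map Neg.neg with hT
  have hTc : T.card = Q.natDegree := by rw [hT, Multiset.card_map, hcard]
  set d := Q.natDegree - i with hd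
  have hne : T.powersetCard d ≠ 0 := by
    intro h
    have := congrArg Multiset.card h
    rw [Multiset.card_powersetCard] at this
    have : 0 < T.card.choose d := Nat.choose_pos (by omega)
    simp_all
  obtain ⟨t, ht⟩ := Multiset.exists_mem_of_ne_zero hne
  obtain ⟨u, hu⟩ := Multiset.exists_cons_of_mem ht
  rw [Multiset.esymm, hu, Multiset.map_cons, Multiset.sum_cons]
  refine add_pos_of_pos_of_nonneg (hprod _ (Multiset.mem_powersetCard.1 ht).1) ?_
  refine Multiset.sum_nonneg ?_
  intro x hx
  obtain ⟨v, hv, rfl⟩ := Multiset.mem_map.1 hx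
  have hv' : v ∈ T.powersetCard d := by
    rw [hu]; exact Multiset.mem_cons_of_mem hv
  exact (hprod _ (Multiset.mem_powersetCard.1 hv').1).le

open Polynomial in
lemma aux_splits_derivative (P : ℝ[X]) (h : P.Splits) : (derivative P).Splits := by
  rw [splits_iff_card_roots] at h ⊢
  have h1 := card_roots_le_derivative P
  have h2 := card_roots' (derivative P)
  have h3 := natDegree_derivative_le P
  by_cases hz : P.natDegree = 0
  · omega
  · omega

open Polynomial in
lemma aux_splits_iterate (P : ℝ[X]) (h : P.Splits) (k : ℕ) : (derivative^[k] P).Splits := by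
  induction k with
  | zero => simpa
  | succ k ih => rw [Function.iterate_succ_apply']; exact aux_splits_derivative _ ih

open Polynomial in
lemma aux_key {n : ℕ} (s : Finset (Fin n)) (y : Fin n → ℝ) (m : ℕ)
    (h : ∀ j ≤ m, 0 ≤ esymmOn s j y) (hm : 0 < esymmOn s m y) (j : ℕ) (hj : j ≤ m) :
    0 < esymmOn s j y := by
  have hms : m ≤ s.card := by
    by_contra! hlt
    rw [esymmOn, Finset.powersetCard_eq_empty.2 hlt] at hm
    simp at hm
  set P : ℝ[X] := ∏ i ∈ s, (X + C (y i)) with hP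
  have hPs : P.Splits := Splits.prod fun i _ => Splits.X_add_C _
  have hPd : P.natDegree = s.card := by
    rw [hP, natDegree_prod_of_monic _ _ fun i _ => monic_X_add_C _]; simp
  set Q := derivative^[s.card - m] P with hQ
  have hc : ∀ i ≤ m, Q.coeff i =
      ((i + (s.card - m)).descFactorial (s.card - m) : ℝ) * esymmOn s (m - i) y := by
    intro i hi
    rw [hQ, coeff_iterate_derivative, hP, Finset.prod_X_add_C_coeff s y (by omega), nsmul_eq_mul]
    have : s.card - (i + (s.card - m)) = m - i := by omega
    rw [this, esymmOn]
  have hd : ∀ i, (0 : ℝ) < ((i + (s.card - m)).descFactorial (s.card - m) : ℝ) := by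
    intro i
    exact_mod_cast Nat.descFactorial_pos.2 (by omega)
  have hdeg : m ≤ Q.natDegree := by
    apply le_natDegree_of_ne_zero
    rw [hc m le_rfl]
    have : esymmOn s (m - m) y = 1 := by simp [esymmOn]
    rw [this]
    exact (mul_pos (hd m) one_pos).ne'
  have hnn : ∀ i, 0 ≤ Q.coeff i := by
    intro i
    by_cases hi : i ≤ m
    · rw [hc i hi]; exact mul_nonneg (hd i).le (h _ (by omega))
    · have h1 := natDegree_iterate_derivative P (s.card - m)
      rw [coeff_eq_zero_of_natDegree_lt]
      rw [← hQ] at h1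
      omega
  have h0 : 0 < Q.coeff 0 := by
    rw [hc 0 (Nat.zero_le _)]; exact mul_pos (hd 0) hm
  have := aux_coeff_pos Q (aux_splits_iterate P hPs _) hnn h0 (m - j) (by omega)
  rw [hc _ (by omega)] at this
  have h2 := pos_of_mul_pos_right this (hd _).le
  rwa [show m - (m - j) = j by omega] at h2

lemma aux_connected {X : Type*} [TopologicalSpace X] [ConnectedSpace X] {n : ℕ}
    (y : X → (Fin n → ℝ)) (hy : Continuous y) (T : Finset (Fin n)) (k : ℕ)
    (H : ∀ p, (∀ j ≤ k, 0 ≤ esymmOn T j (y p)) → ∀ j ≤ k, 0 < esymmOn T j (y p))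
    (hT : k ≤ T.card) (hell : ∃ p₀ : X, ∀ i : Fin n, 0 < y p₀ i) :
    ∀ p, ∀ j ≤ k, 0 < esymmOn T j (y p) := by
  have hcont : ∀ j, Continuous fun p => esymmOn T j (y p) := by
    intro j
    unfold esymmOn
    fun_prop
  have hS1 : {p | ∀ j ≤ k, 0 < esymmOn T j (y p)} =
      ⋂ j ∈ Set.Iic k, {p | 0 < esymmOn T j (y p)} := by
    ext p; simp
  have hS2 : {p | ∀ j ≤ k, 0 < esymmOn T j (y p)} =
      ⋂ j ∈ Set.Iic k, {p | 0 ≤ esymmOn T j (y p)} := by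
    ext p
    simp only [Set.mem_setOf_eq, Set.mem_iInter, Set.mem_Iic]
    exact ⟨fun h j hj => (h j hj).le, H p⟩
  have hclopen : IsClopen {p | ∀ j ≤ k, 0 < esymmOn T j (y p)} := by
    constructor
    · rw [hS2]
      exact isClosed_biInter fun j _ => isClosed_le continuous_const (hcont j)
    · rw [hS1]
      exact (Set.finite_Iic k).isOpen_biInter fun j _ => isOpen_lt continuous_const (hcont j)
  obtain ⟨p₀, hp₀⟩ := hell
  have := hclopen.eq_univ ⟨p₀, fun j hj => by
    unfold esymmOn
    refine Finset.sum_pos (fun t _ => Finset.prod_pos fun i _ => hp₀ i) ?_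
    exact Finset.powersetCard_nonempty.2 (hj.trans hT)⟩
  intro p
  have hp : p ∈ {p | ∀ j ≤ k, 0 < esymmOn T j (y p)} := by rw [this]; trivial
  exact hp

lemma aux_erase {n : ℕ} (y : Fin n → ℝ) (i : Fin n) (k : ℕ) :
    esymmOn Finset.univ (k + 1) y =
      esymmOn (Finset.univ.erase i) (k + 1) y + y i * esymmOn (Finset.univ.erase i) k y := by
  have hi : i ∉ (Finset.univ : Finset (Fin n)).erase i := Finset.notMem_erase _ _
  have hmem : ∀ t ∈ Finset.powersetCard k ((Finset.univ : Finset (Fin n)).erase i), i ∉ t :=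
    fun t ht hit => hi ((Finset.mem_powersetCard.1 ht).1 hit)
  unfold esymmOn
  conv_lhs => rw [← Finset.insert_erase (Finset.mem_univ i), Finset.powersetCard_succ_insert hi]
  rw [Finset.sum_union, Finset.sum_image, Finset.mul_sum]
  · congr 1
    exact Finset.sum_congr rfl fun t ht => Finset.prod_insert (hmem t ht)
  · intro a ha b hb hab
    rw [← Finset.erase_insert (hmem a ha), ← Finset.erase_insert (hmem b hb)]
    exact congrArg (fun t => Finset.erase t i) hab
  · rw [Finset.disjoint_left]
    intro t ht ht2
    obtain ⟨u, _, rfl⟩ := Finset.mem_image.1 ht2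
    exact hi ((Finset.mem_powersetCard.1 ht).1 (Finset.mem_insert_self _ _))

/-- Let `X` be a connected topological space, `n ≥ 3`, `2 ≤ k ≤ n−1`, and let
`y : X → ℝⁿ` be continuous with `σ_{k+1}(y p) > 0` for all `p`, and assume there is a
point `p₀` with all coordinates `y_i(p₀) > 0`. Then for every `p`, every `1 ≤ j ≤ k`
and every `i`, the `j`-th elementary symmetric polynomial of `(y_l(p))_{l ≠ i}` is
positive; in particular `σ_j(y p) > 0` for all `1 ≤ j ≤ k`. -/
theorem stmt1 {X : Type*} [TopologicalSpace X] [ConnectedSpace X] {n k : ℕ}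
    (hn : 3 ≤ n) (hk2 : 2 ≤ k) (hkn : k ≤ n - 1)
    (y : X → (Fin n → ℝ)) (hy : Continuous y)
    (hpos : ∀ p : X, 0 < esymmOn (Finset.univ : Finset (Fin n)) (k + 1) (y p))
    (hell : ∃ p₀ : X, ∀ i : Fin n, 0 < y p₀ i) :
    ∀ p : X, ∀ j : ℕ, 1 ≤ j → j ≤ k →
      (∀ i : Fin n, 0 < esymmOn (Finset.univ.erase i) j (y p)) ∧
      0 < esymmOn (Finset.univ : Finset (Fin n)) j (y p) := by
  intro p j _ hjk
  refine ⟨fun i => ?_, ?_⟩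
  · refine aux_connected y hy _ k ?_ ?_ hell p j hjk
    · intro q hq
      rcases (hq k le_rfl).lt_or_eq with h | h
      · exact aux_key _ _ k hq h
      · have h1 := hpos q
        rw [aux_erase (y q) i k, ← h, mul_zero, add_zero] at h1
        intro j hj
        refine aux_key _ _ (k + 1) ?_ h1 j (by omega)
        intro l hl
        rcases Nat.lt_or_ge k l with h2 | h2
        · obtain rfl : l = k + 1 := by omega
          exact h1.le
        · exact hq l h2
    · rw [Finset.card_erase_of_mem (Finset.mem_univ i)]; simpa using hkn
  · refine aux_connected y hy _ k ?_ ?_ hell p j hjk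
    · intro q hq j hj
      refine aux_key _ _ (k + 1) ?_ (hpos q) j (by omega)
      intro l hl
      rcases Nat.lt_or_ge k l with h2 | h2
      · obtain rfl : l = k + 1 := by omega
        exact (hpos q).le
      · exact hq l h2
    · simp; omega
end

section
/- Let A be a real symmetric n×n matrix with Newton transformations P_k. Then for every 2 ≤ k ≤ n, the identity ∑_{j=0}^{k−1} ( trace(P_j)·A^{k−1−j} − P_j·A^{k−1−j} ) = (n−k)·P_{k−1} holds. -/
/-- The Newton transformations, defined inductively by `P_0 = I` and
`P_k = binom(n,k)·H_k·I + A·P_{k−1}`. -/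
noncomputable def NewtonT (n : ℕ) (κ : Fin n → ℝ) (A : Matrix (Fin n) (Fin n) ℝ) :
    ℕ → Matrix (Fin n) (Fin n) ℝ
  | 0 => 1
  | k + 1 => ((n.choose (k + 1) : ℝ) * Hmc n κ (k + 1)) • (1 : Matrix (Fin n) (Fin n) ℝ)
      + A * NewtonT n κ A k

lemma coef_eq (n : ℕ) (κ : Fin n → ℝ) (k : ℕ) (hk : k ≤ n) :
    (n.choose k : ℝ) * Hmc n κ k = (-1) ^ k * Ssym n κ k := by
  have h : (n.choose k : ℝ) ≠ 0 := by
    exact_mod_cast (Nat.choose_pos hk).ne'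
  unfold Hmc
  field_simp

lemma trace_pow_eq {n : ℕ} (A : Matrix (Fin n) (Fin n) ℝ) (hA : A.IsSymm)
    (κ : Fin n → ℝ)
    (hchar : A.charpoly = ∏ i, (Polynomial.X - Polynomial.C (κ i))) (m : ℕ) :
    (A ^ m).trace = ∑ i, κ i ^ m := by
  have hH : A.IsHermitian := by
    rw [Matrix.IsHermitian, Matrix.conjTranspose_eq_transpose_of_trivial]
    exact hA
  have h1 := hH.roots_charpoly_eq_eigenvalues
  have h2 : A.charpoly.roots = Multiset.map κ Finset.univ.val := by
    rw [hchar, Polynomial.roots_prod _ _ (Finset.prod_ne_zero_iff.2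
      fun i _ => Polynomial.X_sub_C_ne_zero _)]
    simp
  have h3 : (A ^ m).trace = ∑ i, hH.eigenvalues i ^ m := by
    conv_lhs => rw [hH.spectral_theorem, ← map_pow, Unitary.conjStarAlgAut_apply,
      Matrix.trace_mul_comm, ← mul_assoc]
    simp [Matrix.diagonal_pow, Matrix.trace_diagonal]
  rw [h3]
  have h4 := congrArg (fun s => (Multiset.map (fun x : ℝ => x ^ m) s).sum) (h1.symm.trans h2)
  simpa only [Multiset.map_map, Function.comp_def, Finset.sum, RCLike.ofReal_real_eq_id, id] using h4

lemma newton_id {n : ℕ} (κ : Fin n → ℝ) (k : ℕ) :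
    ∑ j ∈ Finset.range k, (-1 : ℝ) ^ j * Ssym n κ j * ∑ i, κ i ^ (k - j)
      = - (k * ((-1) ^ k * Ssym n κ k)) := by
  have h := congrArg (MvPolynomial.aeval κ) (MvPolynomial.mul_esymm_eq_sum (Fin n) ℝ k)
  have he : ∀ j, MvPolynomial.aeval κ (MvPolynomial.esymm (Fin n) ℝ j) = Ssym n κ j := by
    intro j
    simp [MvPolynomial.esymm, Ssym]
  have hp : ∀ j, MvPolynomial.aeval κ (MvPolynomial.psum (Fin n) ℝ j) = ∑ i, κ i ^ j := by
    intro j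
    simp [MvPolynomial.psum]
  simp only [map_mul, map_sum, map_pow, map_neg, map_one, map_natCast, he, hp] at h
  rw [Finset.sum_filter, Finset.Nat.sum_antidiagonal_eq_sum_range_succ_mk,
    Finset.sum_range_succ] at h
  simp only [lt_irrefl, if_false, add_zero] at h
  rw [Finset.sum_congr rfl (fun j hj => if_pos (Finset.mem_range.1 hj))] at h
  have hs : ((-1 : ℝ) ^ k) * (-1) ^ k = 1 := by rw [← mul_pow]; simp
  rw [pow_succ] at h
  linear_combination ((-1 : ℝ) ^ k) * h - (∑ j ∈ Finset.range k, (-1 : ℝ) ^ j * Ssym n κ j * ∑ i, κ i ^ (k - j)) * hs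

lemma newtonT_eq (n : ℕ) (κ : Fin n → ℝ) (A : Matrix (Fin n) (Fin n) ℝ) (k : ℕ) (hk : k ≤ n) :
    NewtonT n κ A k = ∑ j ∈ Finset.range (k + 1), ((-1 : ℝ) ^ j * Ssym n κ j) • A ^ (k - j) := by
  induction k with
  | zero => simp [NewtonT, Ssym]
  | succ k ih =>
    rw [NewtonT, ih (by omega), coef_eq n κ _ hk, Finset.sum_range_succ _ (k + 1), add_comm]
    congr 1
    · rw [Finset.mul_sum]
      refine Finset.sum_congr rfl fun j hj => ?_
      have : k + 1 - j = (k - j) + 1 := by have := Finset.mem_range.1 hj; omega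
      rw [this, pow_succ', mul_smul_comm]
    · simp

lemma trace_newtonT {n : ℕ} (A : Matrix (Fin n) (Fin n) ℝ) (hA : A.IsSymm)
    (κ : Fin n → ℝ)
    (hchar : A.charpoly = ∏ i, (Polynomial.X - Polynomial.C (κ i))) (k : ℕ) (hk : k ≤ n) :
    (NewtonT n κ A k).trace = ((n : ℝ) - k) * ((-1) ^ k * Ssym n κ k) := by
  rw [newtonT_eq n κ A k hk, Matrix.trace_sum]
  simp only [Matrix.trace_smul, smul_eq_mul, trace_pow_eq A hA κ hchar]
  rw [Finset.sum_range_succ, newton_id]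
  simp
  ring

lemma newtonT_comm (n : ℕ) (κ : Fin n → ℝ) (A : Matrix (Fin n) (Fin n) ℝ) (k : ℕ) :
    A * NewtonT n κ A k = NewtonT n κ A k * A := by
  induction k with
  | zero => simp [NewtonT]
  | succ k ih => simp only [NewtonT, mul_add, add_mul]; rw [ih]; simp [← mul_assoc, ih]

lemma main_aux {n : ℕ} (A : Matrix (Fin n) (Fin n) ℝ) (hA : A.IsSymm)
    (κ : Fin n → ℝ)
    (hchar : A.charpoly = ∏ i, (Polynomial.X - Polynomial.C (κ i)))
    (m : ℕ) (hm : m + 1 ≤ n) :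
    ∑ j ∈ Finset.range (m + 1),
        ((NewtonT n κ A j).trace • A ^ (m - j) - NewtonT n κ A j * A ^ (m - j))
      = ((n : ℝ) - ((m : ℝ) + 1)) • NewtonT n κ A m := by
  induction m with
  | zero => simp [NewtonT, sub_smul]
  | succ m ih =>
    rw [Finset.sum_range_succ]
    have h : ∑ j ∈ Finset.range (m + 1),
        ((NewtonT n κ A j).trace • A ^ (m + 1 - j) - NewtonT n κ A j * A ^ (m + 1 - j))
        = (((n : ℝ) - ((m : ℝ) + 1)) • NewtonT n κ A m) * A := by
      rw [← ih (by omega), Finset.sum_mul]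
      refine Finset.sum_congr rfl fun j hj => ?_
      have : m + 1 - j = (m - j) + 1 := by have := Finset.mem_range.1 hj; omega
      rw [this, pow_succ, sub_mul, smul_mul_assoc, mul_assoc]
    rw [h, trace_newtonT A hA κ hchar (m + 1) (by omega), NewtonT, coef_eq n κ _ (by omega),
      smul_mul_assoc, ← newtonT_comm]
    simp only [Nat.sub_self, pow_zero, mul_one]
    push_cast
    module

/-- For a real symmetric `n×n` matrix `A` with eigenvalues `κ₁,…,κₙ` listed with
multiplicity, for every `2 ≤ k ≤ n` one has
`∑_{j=0}^{k−1} ( trace(P_j)·A^{k−1−j} − P_j·A^{k−1−j} ) = (n−k)·P_{k−1}`. -/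
theorem stmt2 {n : ℕ} (A : Matrix (Fin n) (Fin n) ℝ) (hA : A.IsSymm)
    (κ : Fin n → ℝ)
    (hchar : A.charpoly = ∏ i, (Polynomial.X - Polynomial.C (κ i)))
    (k : ℕ) (hk2 : 2 ≤ k) (hkn : k ≤ n) :
    ∑ j ∈ Finset.range k,
        ((NewtonT n κ A j).trace • A ^ (k - 1 - j) - NewtonT n κ A j * A ^ (k - 1 - j))
      = (((n : ℝ) - (k : ℝ))) • NewtonT n κ A (k - 1) := by
  obtain ⟨m, rfl⟩ : ∃ m, k = m + 1 := ⟨k - 1, by omega⟩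
  have h := main_aux A hA κ hchar m hkn
  simpa using h
end

section
/- Let A be a real symmetric n×n matrix with Newton transformations P_k. Then for every 0 ≤ k ≤ n−1, trace(A²·P_k) = binom(n,k+1)·( n·H_1·H_{k+1} − (n−k−1)·H_{k+2} ), where H_j = 0 whenever j > n. -/
open Finset in
lemma aux_newton (n : ℕ) (κ : Fin n → ℝ) (m : ℕ) :
    ((m : ℝ) + 1) * Ssym n κ (m + 1) = (-1) ^ m *
      ∑ j ∈ range (m + 1), (-1) ^ j * Ssym n κ j * ∑ i, κ i ^ (m + 1 - j) := by
  have h := congrArg (MvPolynomial.aeval κ) (MvPolynomial.mul_esymm_eq_sum (Fin n) ℝ (m + 1))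
  have hS : ∀ j, MvPolynomial.aeval κ (MvPolynomial.esymm (Fin n) ℝ j) = Ssym n κ j := by
    intro j
    simp [MvPolynomial.esymm, Ssym]
  have hp : ∀ j, MvPolynomial.aeval κ (MvPolynomial.psum (Fin n) ℝ j) = ∑ i, κ i ^ j := by
    intro j
    simp [MvPolynomial.psum]
  simp only [map_mul, map_sum, map_pow, map_neg, map_one, hS, hp, map_natCast] at h
  rw [sum_filter, Finset.Nat.sum_antidiagonal_eq_sum_range_succ_mk, sum_range_succ] at h
  simp only [lt_irrefl, if_false, add_zero] at h
  rw [sum_congr rfl (fun j hj => if_pos (mem_range.1 hj))] at h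
  push_cast at h
  rw [h]
  ring

lemma aux_trace (n : ℕ) (A : Matrix (Fin n) (Fin n) ℝ) (hA : A.IsSymm) (κ : Fin n → ℝ)
    (hchar : A.charpoly = ∏ i, (Polynomial.X - Polynomial.C (κ i))) (m : ℕ) :
    (A ^ m).trace = ∑ i, κ i ^ m := by
  have hH : A.IsHermitian := by
    rw [Matrix.IsHermitian, Matrix.conjTranspose_eq_transpose_of_trivial]; exact hA
  have h1 : (A ^ m).trace = ∑ i, hH.eigenvalues i ^ m := by
    conv_lhs => rw [hH.spectral_theorem, ← map_pow, Unitary.conjStarAlgAut_apply,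
      Matrix.trace_mul_comm, ← mul_assoc]
    simp [Matrix.diagonal_pow, Matrix.trace_diagonal]
  have h2 := hH.roots_charpoly_eq_eigenvalues
  have h0 : (∏ i, (Polynomial.X - Polynomial.C (κ i))).roots = Finset.univ.val.map κ := by
    have := Polynomial.roots_multiset_prod_X_sub_C (Finset.univ.val.map κ)
    rwa [Multiset.map_map] at this
  rw [hchar, h0] at h2
  have h3 := congrArg (fun s => (s.map (fun x : ℝ => x ^ m)).sum) h2
  simp only [Multiset.map_map] at h3
  rw [h1]
  exact h3.symm

lemma aux_H (n : ℕ) (κ : Fin n → ℝ) (k : ℕ) :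
    (n.choose k : ℝ) * Hmc n κ k = (-1) ^ k * Ssym n κ k := by
  unfold Hmc
  by_cases h : k ≤ n
  · have : (n.choose k : ℝ) ≠ 0 := by exact_mod_cast (Nat.choose_pos h).ne'
    field_simp
  · have : Ssym n κ k = 0 := by
      unfold Ssym
      rw [Finset.powersetCard_eq_empty.2 (by simpa using h)]
      simp
    simp [this]

open Finset in
lemma aux_P (n : ℕ) (κ : Fin n → ℝ) (A : Matrix (Fin n) (Fin n) ℝ) (k : ℕ) :
    NewtonT n κ A k = ∑ j ∈ range (k + 1), ((-1) ^ j * Ssym n κ j) • A ^ (k - j) := by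
  induction k with
  | zero => simp [NewtonT, Ssym]
  | succ k ih =>
    rw [NewtonT, ih, sum_range_succ _ (k + 1), aux_H, mul_sum, add_comm]
    congr 1
    · refine sum_congr rfl fun j hj => ?_
      have := mem_range.1 hj
      rw [mul_smul_comm, ← pow_succ', show k + 1 - j = k - j + 1 by omega]
    · simp

/-- For a real symmetric `n×n` matrix `A` with eigenvalues `κ₁,…,κₙ` listed with
multiplicity, for every `0 ≤ k ≤ n−1` one has
`trace(A²·P_k) = binom(n,k+1)·( n·H_1·H_{k+1} − (n−k−1)·H_{k+2} )`
(where `H_j = 0` for `j > n`). -/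
theorem stmt8 {n : ℕ} (hn : 1 ≤ n) (A : Matrix (Fin n) (Fin n) ℝ) (hA : A.IsSymm)
    (κ : Fin n → ℝ)
    (hchar : A.charpoly = ∏ i, (Polynomial.X - Polynomial.C (κ i)))
    (k : ℕ) (hk : k ≤ n - 1) :
    (A ^ 2 * NewtonT n κ A k).trace
      = (n.choose (k + 1) : ℝ) *
          ((n : ℝ) * Hmc n κ 1 * Hmc n κ (k + 1) - ((n : ℝ) - (k : ℝ) - 1) * Hmc n κ (k + 2)) := by
  have hT : (A ^ 2 * NewtonT n κ A k).trace
      = ∑ j ∈ Finset.range (k + 1), (-1) ^ j * Ssym n κ j * ∑ i, κ i ^ (k + 1 + 1 - j) := by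
    rw [aux_P, Finset.mul_sum, Matrix.trace_sum]
    refine Finset.sum_congr rfl fun j hj => ?_
    have := Finset.mem_range.1 hj
    rw [mul_smul_comm, ← pow_add, Matrix.trace_smul, aux_trace n A hA κ hchar, smul_eq_mul,
      show 2 + (k - j) = k + 1 + 1 - j by omega]
  have hN := aux_newton n κ (k + 1)
  rw [Finset.sum_range_succ, ← hT] at hN
  have h1 : ∑ i, κ i ^ (k + 1 + 1 - (k + 1)) = Ssym n κ 1 := by
    have := aux_newton n κ 0
    simp [Ssym] at this
    simp [Ssym, ← this]
  rw [h1] at hN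
  have e1 : (n : ℝ) * Hmc n κ 1 = - Ssym n κ 1 := by
    have := aux_H n κ 1
    simpa using this
  have e2 := aux_H n κ (k + 1)
  have e3 := aux_H n κ (k + 2)
  have hc : (n.choose (k + 1) : ℝ) * ((n : ℝ) - k - 1) = n.choose (k + 2) * (k + 2) := by
    have := Nat.choose_succ_right_eq n (k + 1)
    have h := congrArg (Nat.cast : ℕ → ℝ) this
    rw [Nat.cast_mul, Nat.cast_mul, Nat.cast_sub (by omega)] at h
    push_cast at h
    linarith
  have hs : ((-1 : ℝ) ^ k) * (-1) ^ k = 1 := by rw [← mul_pow]; simp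
  set T := (A ^ 2 * NewtonT n κ A k).trace
  have hr : (n.choose (k + 1) : ℝ) *
      ((n : ℝ) * Hmc n κ 1 * Hmc n κ (k + 1) - ((n : ℝ) - (k : ℝ) - 1) * Hmc n κ (k + 2))
      = -Ssym n κ 1 * ((-1) ^ (k + 1) * Ssym n κ (k + 1))
        - (k + 2) * ((-1) ^ (k + 2) * Ssym n κ (k + 2)) := by
    rw [← e2, ← e3, e1]
    linear_combination (-Hmc n κ (k + 2)) * hc
  rw [hr]
  push_cast at hN
  simp only [pow_succ] at hN ⊢
  linear_combination ((-1) ^ k) * hN - (T - (-1)^k * Ssym n κ (k + 1) * Ssym n κ 1) * hs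
end

section
/- Fix n ≥ 1 and 0 ≤ k ≤ n−1. For an n×n real matrix M, define S_j(M) by the expansion det(t·I − M) = ∑_{j=0}^{n} (−1)^j·S_j(M)·t^{n−j} (so each S_j(M) is a polynomial function of the entries of M), set binom(n,j)·H_j(M) = (−1)^j·S_j(M), and define P_k(M) inductively by P_0(M) = I and P_j(M) = binom(n,j)·H_j(M)·I + M·P_{j−1}(M). Then for all real symmetric n×n matrices A and B, the function t ↦ H_{k+1}(A + t·B) is differentiable and binom(n,k+1) · (d/dt)|_{t=0} H_{k+1}(A + t·B) = −trace( P_k(A)·B ). -/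
/-- `S_j(M)`, defined by the expansion `det(t·I − M) = ∑_{j=0}^n (−1)^j·S_j(M)·t^{n−j}`:
since the characteristic polynomial `det(X·I − M)` is monic of degree `n`, this means
`S_j(M) = (−1)^j ·` (coefficient of `X^{n−j}` in the characteristic polynomial), a
polynomial function of the entries of `M`. -/
noncomputable def SM (n : ℕ) (M : Matrix (Fin n) (Fin n) ℝ) (j : ℕ) : ℝ :=
  (-1 : ℝ) ^ j * M.charpoly.coeff (n - j)

/-- `H_j(M)`, defined by `binom(n,j)·H_j(M) = (−1)^j·S_j(M)`. -/
noncomputable def HM (n : ℕ) (M : Matrix (Fin n) (Fin n) ℝ) (j : ℕ) : ℝ :=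
  (-1 : ℝ) ^ j * SM n M j / (n.choose j : ℝ)

/-- The Newton transformations `P_j(M)`, defined inductively by `P_0(M) = I` and
`P_j(M) = binom(n,j)·H_j(M)·I + M·P_{j−1}(M)`. -/
noncomputable def PM (n : ℕ) (M : Matrix (Fin n) (Fin n) ℝ) :
    ℕ → Matrix (Fin n) (Fin n) ℝ
  | 0 => 1
  | j + 1 => ((n.choose (j + 1) : ℝ) * HM n M (j + 1)) • (1 : Matrix (Fin n) (Fin n) ℝ)
      + M * PM n M j

open Polynomial in
theorem aux_derivative_det {S : Type*} [CommRing S] {n : ℕ} (M : Matrix (Fin n) (Fin n) S[X]) :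
    derivative M.det = (M.adjugate * M.map (fun p => derivative p)).trace := by
  have h1 : (M.adjugate * M.map (fun p => derivative p)).trace
      = ∑ i, (M.updateCol i (fun j => derivative (M j i))).det := by
    rw [Matrix.trace]
    refine Finset.sum_congr rfl fun i _ => ?_
    rw [← Matrix.cramer_apply, Matrix.cramer_eq_adjugate_mulVec]
    rfl
  rw [h1]
  simp only [Matrix.det_apply']
  rw [Finset.sum_comm, derivative_sum]
  refine Finset.sum_congr rfl fun σ _ => ?_
  rw [← Finset.mul_sum]
  have h2 : derivative (((Equiv.Perm.sign σ : ℤ) : S[X])) = 0 := derivative_intCast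
  rw [derivative_mul, h2, zero_mul, zero_add, derivative_prod_finset]
  congr 1
  refine Finset.sum_congr rfl fun i _ => ?_
  rw [← Finset.mul_prod_erase Finset.univ _ (Finset.mem_univ i), mul_comm]
  congr 1
  · simp
  · refine Finset.prod_congr rfl fun j hj => ?_
    rw [Matrix.updateCol_ne (Finset.ne_of_mem_erase hj)]

open Polynomial in
theorem aux_coeff {n : ℕ} (hn : 1 ≤ n) (A : Matrix (Fin n) (Fin n) ℝ) (k : ℕ) (hk : k ≤ n - 1) :
    (matPolyEquiv A.charmatrix.adjugate).coeff (n - 1 - k) = PM n A k := by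
  have : Nonempty (Fin n) := ⟨⟨0, hn⟩⟩
  set G := matPolyEquiv A.charmatrix.adjugate with hG
  have h : (X - C A) * G = A.charpoly.map (algebraMap ℝ (Matrix (Fin n) (Fin n) ℝ)) := by
    rw [hG, ← Matrix.matPolyEquiv_charmatrix, ← map_mul, Matrix.mul_adjugate,
      ← Matrix.charpoly, matPolyEquiv_smul_one]
  have hrec : ∀ m, G.coeff m = A.charpoly.coeff (m + 1) • 1 + A * G.coeff (m + 1) := by
    intro m
    have := congrArg (fun p => p.coeff (m + 1)) h
    simp only [sub_mul, coeff_sub, coeff_X_mul, coeff_C_mul, coeff_map,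
      Algebra.algebraMap_eq_smul_one] at this
    rw [← this]; abel
  have hdeg : G.coeff n = 0 := by
    by_cases hG0 : G = 0
    · simp [hG0]
    apply coeff_eq_zero_of_natDegree_lt
    have h3 := (monic_X_sub_C A).natDegree_mul' hG0
    have h4 : (A.charpoly.map (algebraMap ℝ (Matrix (Fin n) (Fin n) ℝ))).natDegree ≤ n := by
      refine natDegree_map_le.trans ?_
      rw [Matrix.charpoly_natDegree_eq_dim]; simp
    rw [h, natDegree_X_sub_C] at h3
    omega
  induction k with
  | zero =>
    rw [Nat.sub_zero, hrec, Nat.sub_add_cancel hn, hdeg]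
    have : A.charpoly.coeff n = 1 := by
      have := A.charpoly_monic
      rw [Monic, leadingCoeff, Matrix.charpoly_natDegree_eq_dim, Fintype.card_fin] at this
      exact this
    simp [this, PM]
  | succ k ih =>
    rw [hrec, show n - 1 - (k + 1) + 1 = n - 1 - k by omega, ih (by omega), PM]
    congr 2
    have hc : (n.choose (k + 1) : ℝ) ≠ 0 := by
      exact_mod_cast (Nat.choose_pos (by omega)).ne'
    rw [HM, SM, mul_div_cancel₀ _ hc, ← mul_assoc, ← mul_pow,
      show n - (k + 1) = n - 1 - k by omega]
    simp

open Polynomial in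
theorem aux_main {n : ℕ} (A B : Matrix (Fin n) (Fin n) ℝ) (m : ℕ) :
    ∃ p : ℝ[X], (∀ t : ℝ, (A + t • B).charpoly.coeff m = p.eval t) ∧
      (derivative p).eval 0 = -((matPolyEquiv A.charmatrix.adjugate).coeff m * B).trace := by
  let M : Matrix (Fin n) (Fin n) ℝ[X][X] :=
    Matrix.of fun i j => C (A.charmatrix i j) - X * C (C (B i j))
  have hM : ∀ t : ℝ, (A + t • B).charpoly = M.det.eval (C t) := by
    intro t
    rw [← coe_evalRingHom, RingHom.map_det, Matrix.charpoly]
    congr 1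
    ext1 i j
    simp [M, Matrix.charmatrix_apply]
    ring
  refine ⟨∑ i ∈ Finset.range (M.det.natDegree + 1), C ((M.det.coeff i).coeff m) * X ^ i, ?_, ?_⟩
  · intro t
    rw [hM, eval_eq_sum_range, finsetSum_coeff, eval_finsetSum]
    refine Finset.sum_congr rfl fun i _ => ?_
    rw [← C_pow, coeff_mul_C]; simp
  · have h0 : M.map (evalRingHom 0) = A.charmatrix := by
      ext1 i j; simp [M]
    have h1 : (derivative M.det).eval 0 = (A.charmatrix.adjugate * (-B.map C)).trace := by
      rw [aux_derivative_det, ← coe_evalRingHom, AddMonoidHom.map_trace, Matrix.map_mul]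
      have h3 : M.adjugate.map (evalRingHom 0) = A.charmatrix.adjugate := by
        rw [← h0]
        exact RingHom.map_adjugate (evalRingHom 0) M
      have h4 : (M.map (fun p => derivative p)).map (evalRingHom 0) = -B.map C := by
        ext1 i j; simp [M]
      rw [h3, h4]
    have h2 : ((derivative M.det).eval 0).coeff m =
      -((matPolyEquiv A.charmatrix.adjugate).coeff m * B).trace := by
      rw [h1]
      simp only [Matrix.trace, Matrix.diag, Matrix.mul_apply, finsetSum_coeff,
        ← Finset.sum_neg_distrib]
      simp [matPolyEquiv_coeff_apply]
    rw [← h2, ← coeff_zero_eq_eval_zero, ← coeff_zero_eq_eval_zero, coeff_derivative,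
      coeff_derivative]
    simp only [finsetSum_coeff, coeff_C_mul, coeff_X_pow]
    by_cases hd : M.det.natDegree = 0
    · have : M.det.coeff 1 = 0 := coeff_eq_zero_of_natDegree_lt (by omega)
      simp [hd, this]
    · simp; omega

/-- Fix `n ≥ 1` and `0 ≤ k ≤ n−1`. For all real symmetric `n×n` matrices `A` and `B`,
the function `t ↦ H_{k+1}(A + t·B)` is differentiable, and
`binom(n,k+1) · (d/dt)|_{t=0} H_{k+1}(A + t·B) = −trace( P_k(A)·B )`. -/
theorem stmt9 {n : ℕ} (hn : 1 ≤ n) (k : ℕ) (hk : k ≤ n - 1)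
    (A B : Matrix (Fin n) (Fin n) ℝ) (hA : A.IsSymm) (hB : B.IsSymm) :
    Differentiable ℝ (fun t : ℝ => HM n (A + t • B) (k + 1)) ∧
    (n.choose (k + 1) : ℝ) * deriv (fun t : ℝ => HM n (A + t • B) (k + 1)) 0
      = -(PM n A k * B).trace := by
  have hc : (n.choose (k + 1) : ℝ) ≠ 0 := by
    exact_mod_cast (Nat.choose_pos (by omega)).ne'
  obtain ⟨p, hp, hp'⟩ := aux_main A B (n - 1 - k)
  have hf : (fun t : ℝ => HM n (A + t • B) (k + 1))
      = fun t => p.eval t / (n.choose (k + 1) : ℝ) := by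
    funext t
    rw [← hp, HM, SM, ← mul_assoc, ← mul_pow, show n - (k + 1) = n - 1 - k by omega]
    simp
  rw [hf]
  refine ⟨p.differentiable.div_const _, ?_⟩
  rw [deriv_div_const, mul_div_cancel₀ _ hc, Polynomial.deriv, hp', aux_coeff hn A k hk]
end

section
/- Let n ≥ 3 and let y = (y₁,…,yₙ) ∈ ℝⁿ satisfy p_1(y) > 0 and p_2(y) > 0. Then p_1(y)·p_2(y) − p_3(y) ≥ (p_2(y)/p_1(y))·(p_1(y)² − p_2(y)) ≥ 0, and p_1(y)·p_2(y) = p_3(y) if and only if y₁ = y₂ = ⋯ = yₙ. -/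
/-- The normalized `j`-th elementary symmetric function
`p_j(y) = σ_j(y)/binom(n,j)` of `y = (y₁,…,yₙ) ∈ ℝⁿ` (with `p_0 = 1`, and
`p_j(y) = 0` for `j > n`). -/
noncomputable def pF (n : ℕ) (y : Fin n → ℝ) (j : ℕ) : ℝ :=
  (∑ t ∈ (Finset.univ : Finset (Fin n)).powersetCard j, ∏ i ∈ t, y i) / (n.choose j : ℝ)

theorem aux_newton_s12 (n : ℕ) (y : Fin n → ℝ) :
    (∑ t ∈ (Finset.univ : Finset (Fin n)).powersetCard 1, ∏ i ∈ t, y i) = ∑ i, y i ∧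
    2 * (∑ t ∈ (Finset.univ : Finset (Fin n)).powersetCard 2, ∏ i ∈ t, y i)
      = (∑ i, y i) ^ 2 - ∑ i, y i ^ 2 ∧
    3 * (∑ t ∈ (Finset.univ : Finset (Fin n)).powersetCard 3, ∏ i ∈ t, y i)
      = (∑ t ∈ (Finset.univ : Finset (Fin n)).powersetCard 2, ∏ i ∈ t, y i) * (∑ i, y i)
        - (∑ i, y i) * (∑ i, y i ^ 2) + ∑ i, y i ^ 3 := by
  have e : ∀ k, MvPolynomial.eval y (MvPolynomial.esymm (Fin n) ℝ k)
      = ∑ t ∈ (Finset.univ : Finset (Fin n)).powersetCard k, ∏ i ∈ t, y i := by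
    intro k; simp [MvPolynomial.esymm, map_sum, map_prod]
  have p : ∀ k, MvPolynomial.eval y (MvPolynomial.psum (Fin n) ℝ k) = ∑ i, y i ^ k := by
    intro k; simp [MvPolynomial.psum, map_sum]
  have h1 : (∑ t ∈ (Finset.univ : Finset (Fin n)).powersetCard 1, ∏ i ∈ t, y i) = ∑ i, y i := by
    simp [Finset.powersetCard_one]
  have key : ∀ k : ℕ, (k : ℝ) * (∑ t ∈ (Finset.univ : Finset (Fin n)).powersetCard k, ∏ i ∈ t, y i)
      = (-1) ^ (k + 1) * ∑ a ∈ (Finset.HasAntidiagonal.antidiagonal k).filter (fun a => a.1 < k),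
        (-1) ^ a.1 * (∑ t ∈ (Finset.univ : Finset (Fin n)).powersetCard a.1, ∏ i ∈ t, y i)
          * ∑ i, y i ^ a.2 := by
    intro k
    have := congrArg (MvPolynomial.eval y) (MvPolynomial.mul_esymm_eq_sum (Fin n) ℝ k)
    simpa [e, p, map_sum] using this
  have k2 := key 2
  have k3 := key 3
  have f2 : (Finset.HasAntidiagonal.antidiagonal 2).filter (fun a : ℕ × ℕ => a.1 < 2) = {(0,2),(1,1)} := by decide
  have f3 : (Finset.HasAntidiagonal.antidiagonal 3).filter (fun a : ℕ × ℕ => a.1 < 3) = {(0,3),(1,2),(2,1)} := by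
    decide
  rw [f2, Finset.sum_insert (by simp), Finset.sum_singleton] at k2
  rw [f3, Finset.sum_insert (by simp), Finset.sum_insert (by simp), Finset.sum_singleton] at k3
  simp only [h1] at k2 k3
  norm_num at k2 k3
  refine ⟨h1, ?_, ?_⟩ <;> linarith

theorem aux_half (n : ℕ) (hn : 3 ≤ n) (z : Fin n → ℝ) (hz : ∑ i, z i = 0) (M : ℝ)
    (hM : 0 ≤ M) (hM2 : n * M ^ 2 = (n - 1) * ∑ i, z i ^ 2) :
    (n - 1) * ∑ i, z i ^ 3 ≤ (n - 2) * M * ∑ i, z i ^ 2 := by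
  have hN : (3:ℝ) ≤ n := by exact_mod_cast hn
  have hb : ∀ i, z i ≤ M := by
    intro i
    have c := sq_sum_le_card_mul_sum_sq (s := Finset.univ.erase i) (f := z)
    have a1 := Finset.add_sum_erase Finset.univ z (Finset.mem_univ i)
    have a2 := Finset.add_sum_erase Finset.univ (fun j => z j ^ 2) (Finset.mem_univ i)
    rw [Finset.card_erase_of_mem (Finset.mem_univ i), Finset.card_univ, Fintype.card_fin,
      Nat.cast_sub (by omega)] at c
    have a3 : ∑ x ∈ Finset.univ.erase i, z x = - z i := by linarith
    have a4 : ∑ x ∈ Finset.univ.erase i, z x ^ 2 = (∑ x, z x ^ 2) - z i ^ 2 := by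
      linarith
    rw [a3, a4] at c
    push_cast at c
    have : z i ^ 2 ≤ M ^ 2 := by
      have : (n:ℝ) * z i ^ 2 ≤ n * M ^ 2 := by nlinarith
      exact le_of_mul_le_mul_left this (by linarith)
    exact (le_abs_self _).trans (abs_le_of_sq_le_sq this hM)
  have hs : ∑ i, (z i - M) * ((n - 1) * z i + M) ^ 2 ≤ 0 := by
    apply Finset.sum_nonpos
    intro i _
    exact mul_nonpos_of_nonpos_of_nonneg (by linarith [hb i]) (sq_nonneg _)
  have ex : ∑ i, (z i - M) * ((n - 1) * z i + M) ^ 2 =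
      (n - 1) ^ 2 * ∑ i, z i ^ 3 + (2 * (n - 1) * M - (n - 1) ^ 2 * M) * ∑ i, z i ^ 2
        + (M ^ 2 - 2 * (n - 1) * M ^ 2) * ∑ i, z i - n * M ^ 3 := by
    have : (n:ℝ) * M ^ 3 = ∑ i : Fin n, M ^ 3 := by simp
    rw [this, Finset.mul_sum, Finset.mul_sum, Finset.mul_sum, ← Finset.sum_add_distrib,
      ← Finset.sum_add_distrib, ← Finset.sum_sub_distrib]
    apply Finset.sum_congr rfl
    intro i _
    ring
  rw [ex, hz] at hs
  have h3 : (n:ℝ) * M ^ 3 = M * ((n - 1) * ∑ i, z i ^ 2) := by rw [← hM2]; ring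
  rw [h3] at hs
  have : ((n:ℝ) - 1) * ((n - 1) * ∑ i, z i ^ 3) ≤ (n - 1) * ((n - 2) * M * ∑ i, z i ^ 2) := by
    linarith
  exact le_of_mul_le_mul_left this (by linarith)

theorem aux_skew (n : ℕ) (hn : 3 ≤ n) (z : Fin n → ℝ) (hz : ∑ i, z i = 0) :
    n * (n - 1) * (∑ i, z i ^ 3) ^ 2 ≤ (n - 2) ^ 2 * (∑ i, z i ^ 2) ^ 3 := by
  have hN : (3:ℝ) ≤ n := by exact_mod_cast hn
  have hS : 0 ≤ ∑ i, z i ^ 2 := Finset.sum_nonneg fun i _ => sq_nonneg _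
  have hq : 0 ≤ ((n:ℝ) - 1) * (∑ i, z i ^ 2) / n :=
    div_nonneg (mul_nonneg (by linarith) hS) (by linarith)
  obtain ⟨M, hM, hM2⟩ : ∃ M : ℝ, 0 ≤ M ∧ n * M ^ 2 = (n - 1) * ∑ i, z i ^ 2 := by
    refine ⟨√(((n:ℝ) - 1) * (∑ i, z i ^ 2) / n), Real.sqrt_nonneg _, ?_⟩
    rw [Real.sq_sqrt hq]; field_simp
  have u := aux_half n hn z hz M hM hM2
  have l := aux_half n hn (fun i => - z i) (by simp [hz]) M hM (by simpa using hM2)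
  have o : ∀ i, (- z i) ^ 3 = - z i ^ 3 := fun i => by ring
  simp only [o, even_two.neg_pow, Finset.sum_neg_distrib] at l
  have hsq := sq_le_sq' (a := (n - 1) * ∑ i, z i ^ 3) (b := (n - 2) * M * ∑ i, z i ^ 2)
    (by linarith) u
  have h4 := mul_le_mul_of_nonneg_left hsq (by linarith : (0:ℝ) ≤ n)
  have h5 : (n:ℝ) * ((n - 2) * M * ∑ i, z i ^ 2) ^ 2
      = (n - 1) * ((n - 2) ^ 2 * (∑ i, z i ^ 2) ^ 3) := by
    calc _ = (n * M ^ 2) * ((n - 2) ^ 2 * (∑ i, z i ^ 2) ^ 2) := by ring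
      _ = _ := by rw [hM2]; ring
  rw [h5] at h4
  refine le_of_mul_le_mul_left (a := (n:ℝ) - 1) ?_ (by linarith)
  linarith

theorem aux_main_s12 (n : ℕ) (hn : 3 ≤ n) (y : Fin n → ℝ) :
    ∃ u w : ℝ, 0 ≤ u ∧ w ^ 2 ≤ 4 * u ^ 3 ∧ pF n y 2 = pF n y 1 ^ 2 - u ∧
      pF n y 3 = pF n y 1 ^ 3 - 3 * pF n y 1 * u + w ∧ (u = 0 ↔ ∀ i i' : Fin n, y i = y i') := by
  have hN : (3:ℝ) ≤ n := by exact_mod_cast hn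
  have hN1 : (0:ℝ) < n - 1 := by linarith
  have hN2 : (0:ℝ) < n - 2 := by linarith
  have hN0 : (0:ℝ) < n := by linarith
  obtain ⟨e1, e2, e3⟩ := aux_newton_s12 n y
  have c2 : (n.choose 2 : ℝ) = n * (n - 1) / 2 := Nat.cast_choose_two ℝ n
  have c3 : (n.choose 3 : ℝ) = n * (n - 1) * (n - 2) / 6 := by
    have := Nat.choose_succ_right_eq n 2
    have h := congrArg (Nat.cast (R := ℝ)) this
    rw [Nat.cast_mul, Nat.cast_mul, Nat.cast_sub (by omega), c2] at h
    push_cast at h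
    linarith
  obtain ⟨m, hm⟩ : ∃ m, m = (∑ i, y i) / n := ⟨_, rfl⟩
  have p1 : pF n y 1 = m := by simp only [pF, e1, Nat.choose_one_right, hm]
  have hsum : ∑ i, y i = n * m := by rw [hm]; field_simp
  have hz : ∑ i, (y i - m) = 0 := by simp [Finset.sum_sub_distrib, hsum]
  have s2 : ∑ i, y i ^ 2 = ∑ i, (y i - m) ^ 2 + n * m ^ 2 := by
    have : ∑ i, y i ^ 2 = ∑ i, (y i - m) ^ 2 + (2 * m) * ∑ i, (y i - m) + ∑ i : Fin n, m ^ 2 := by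
      rw [Finset.mul_sum, ← Finset.sum_add_distrib, ← Finset.sum_add_distrib]
      exact Finset.sum_congr rfl fun i _ => by ring
    rw [this, hz]; simp
  have s3 : ∑ i, y i ^ 3 = ∑ i, (y i - m) ^ 3 + 3 * m * ∑ i, (y i - m) ^ 2 + n * m ^ 3 := by
    have : ∑ i, y i ^ 3 = ∑ i, (y i - m) ^ 3 + 3 * m * ∑ i, (y i - m) ^ 2
        + (3 * m ^ 2) * ∑ i, (y i - m) + ∑ i : Fin n, m ^ 3 := by
      rw [Finset.mul_sum, Finset.mul_sum, ← Finset.sum_add_distrib, ← Finset.sum_add_distrib,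
        ← Finset.sum_add_distrib]
      exact Finset.sum_congr rfl fun i _ => by ring
    rw [this, hz]; simp
  have sk := aux_skew n hn _ hz
  have hS0 : (∑ i, (y i - m) ^ 2 = 0 ↔ ∀ i i' : Fin n, y i = y i') := by
    rw [Finset.sum_eq_zero_iff_of_nonneg fun i _ => sq_nonneg _]
    constructor
    · intro h i j
      have a := pow_eq_zero_iff (two_ne_zero) |>.1 (h i (Finset.mem_univ _))
      have b := pow_eq_zero_iff (two_ne_zero) |>.1 (h j (Finset.mem_univ _))
      linarith
    · intro h i _
      have : ∑ j, y j = n * y i := by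
        rw [Finset.sum_congr rfl fun j _ => h j i]; simp
      have : y i = m := by
        rw [hsum] at this; exact (mul_left_cancel₀ hN0.ne' this).symm
      simp [this]
  have hS : 0 ≤ ∑ i, (y i - m) ^ 2 := Finset.sum_nonneg fun i _ => sq_nonneg _
  rw [s2, hsum] at e2 e3
  rw [s3] at e3
  generalize ∑ i, (y i - m) ^ 2 = S at *
  generalize ∑ i, (y i - m) ^ 3 = T at *
  refine ⟨S / (n * (n - 1)), 2 * T / (n * (n - 1) * (n - 2)), by positivity, ?_, ?_, ?_, ?_⟩
  · have : 4 * (S / (n * (n - 1))) ^ 3 - (2 * T / (n * (n - 1) * (n - 2))) ^ 2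
        = 4 * ((n - 2) ^ 2 * S ^ 3 - n * (n - 1) * T ^ 2) / ((n * (n - 1)) ^ 3 * (n - 2) ^ 2) := by
      field_simp
      ring
    have h : 0 ≤ 4 * ((n - 2) ^ 2 * S ^ 3 - n * (n - 1) * T ^ 2)
        / (((n:ℝ) * (n - 1)) ^ 3 * (n - 2) ^ 2) := div_nonneg (by linarith) (by positivity)
    linarith
  · rw [p1]; unfold pF; rw [c2]; field_simp; linarith
  · rw [p1]; unfold pF; rw [c3]
    generalize ∑ t ∈ (Finset.univ : Finset (Fin n)).powersetCard 2, ∏ i ∈ t, y i = E at *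
    have hE : E = ((n * m) ^ 2 - (S + n * m ^ 2)) / 2 := by linarith
    subst hE
    rw [div_eq_iff (by positivity)]
    field_simp
    linarith
  · rw [← hS0, div_eq_zero_iff]
    constructor
    · rintro (h | h)
      · exact h
      · exact absurd h (by positivity)
    · exact Or.inl

/-- Let `n ≥ 3` and `y ∈ ℝⁿ` with `p_1(y) > 0` and `p_2(y) > 0`. Then
`p_1·p_2 − p_3 ≥ (p_2/p_1)·(p_1² − p_2) ≥ 0`, and `p_1·p_2 = p_3` iff `y₁ = ⋯ = yₙ`. -/
theorem stmt12 {n : ℕ} (hn : 3 ≤ n) (y : Fin n → ℝ)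
    (h1 : 0 < pF n y 1) (h2 : 0 < pF n y 2) :
    (pF n y 2 / pF n y 1) * (pF n y 1 ^ 2 - pF n y 2) ≤ pF n y 1 * pF n y 2 - pF n y 3 ∧
    0 ≤ (pF n y 2 / pF n y 1) * (pF n y 1 ^ 2 - pF n y 2) ∧
    (pF n y 1 * pF n y 2 = pF n y 3 ↔ ∀ i i' : Fin n, y i = y i') := by
  obtain ⟨u, w, hu, hw, e2, e3, hiff⟩ := aux_main_s12 n hn y
  rw [← hiff]
  generalize pF n y 1 = a at *
  generalize pF n y 2 = b at *
  generalize pF n y 3 = c at *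
  have hd : 0 < b / a := div_pos h2 h1
  have w0 : u = 0 → w = 0 := by
    intro h; subst h
    exact pow_eq_zero_iff two_ne_zero |>.1 (le_antisymm (by simpa using hw) (sq_nonneg w))
  have newton : a * c ≤ b ^ 2 := by
    subst e2 e3
    have : 0 ≤ a ^ 2 * u - a * w + u ^ 2 := by
      rcases hu.eq_or_lt with h | h
      · rw [w0 h.symm, ← h]; simp
      · have : 0 ≤ (4 * u) * (a ^ 2 * u - a * w + u ^ 2) := by
          nlinarith [sq_nonneg (2 * a * u - w)]
        exact nonneg_of_mul_nonneg_right this (by linarith)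
    linarith
  have first : (b / a) * (a ^ 2 - b) ≤ a * b - c := by
    have h : (b / a) * (a ^ 2 - b) = a * b - b ^ 2 / a := by field_simp
    have : c ≤ b ^ 2 / a := by rw [le_div_iff₀ h1]; linarith
    linarith
  have hub : a ^ 2 - b = u := by linarith
  refine ⟨first, mul_nonneg hd.le (by linarith), ?_, ?_⟩
  · intro h
    rw [hub, h, sub_self] at first
    exact le_antisymm (nonpos_of_mul_nonpos_right first hd) hu
  · intro h
    rw [e2, e3, w0 h, h]; ring
end
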